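/- Let b ≥ 2 be a real number and let q satisfy b/(b+1) ≤ q < 1. Then 1/2 < 1 - q²/b, and the function F(z) = z - (1-q)²(1-z)/(1 - q²/b - z) - (b-1)q²/(b²(1-z)) has exactly two zeros in the interval [0, 1 - q²/b): exactly one zero in the open interval (0, 1/2) and exactly one zero in the open interval (1/2, 1 - q²/b). -/

import Mathlib

/-!
Since `(1 - z) / (c - z) = 1 + (1 - c) / (c - z)`, the function `F` is an affine function minus
nonnegative multiples of the convex functions `1 / (c - z)` and `1 / (1 - z)`, so it is concave to
the left of its first pole `c = 1 - q² / b`. It is negative at `0`, positive at `1 / 2` and tends to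
`-∞` at `c`, so it vanishes on each side of `1 / 2`. It vanishes only once on each side: where a
concave function lies below its value at a point `m`, it is strictly increasing to the left of `m`
and strictly decreasing to the right.
-/

open Set Filter Topology

section ConcaveOn

variable {𝕜 β : Type*} [Field 𝕜] [LinearOrder 𝕜] [IsStrictOrderedRing 𝕜]
  [AddCommMonoid β] [LinearOrder β] [IsOrderedCancelAddMonoid β] [Module 𝕜 β]
  [PosSMulStrictMono 𝕜 β] {s : Set 𝕜} {f : 𝕜 → β} {m : 𝕜}

lemma strictMonoOn_of_concaveOn_of_lt (hf : ConcaveOn 𝕜 s f) (hm : m ∈ s) :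
    StrictMonoOn f {x ∈ s | x ≤ m ∧ f x < f m} := by
  rintro x ⟨hxs, -, -⟩ y ⟨-, hym, hfy⟩ hxy
  contrapose! hfy
  exact hf.right_le_of_le_left'' hxs hm hxy hym hfy

lemma strictAntiOn_of_concaveOn_of_lt (hf : ConcaveOn 𝕜 s f) (hm : m ∈ s) :
    StrictAntiOn f {x ∈ s | m ≤ x ∧ f x < f m} := by
  rintro x ⟨-, hmx, hfx⟩ y ⟨hys, -, -⟩ hxy
  contrapose! hfx
  exact hf.left_le_of_le_right'' hm hys hmx hxy hfx

end ConcaveOn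

section Roots

variable {f : ℝ → ℝ} {a b m r : ℝ}

lemma existsUnique_mem_Ioo_eq_of_concaveOn_Icc (hf : ConcaveOn ℝ (Icc a m) f)
    (hcont : ContinuousOn f (Icc a m)) (ham : a ≤ m) (ha : f a < r) (hm : r < f m) :
    ∃! x, x ∈ Ioo a m ∧ f x = r := by
  obtain ⟨x, hx, hfx⟩ := intermediate_value_Ioo ham hcont ⟨ha, hm⟩
  refine ⟨x, ⟨hx, hfx⟩, fun y ⟨hy, hfy⟩ ↦ ?_⟩
  exact (strictMonoOn_of_concaveOn_of_lt hf (right_mem_Icc.2 ham)).injOn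
    ⟨Ioo_subset_Icc_self hy, hy.2.le, hfy.trans_lt hm⟩
    ⟨Ioo_subset_Icc_self hx, hx.2.le, hfx.trans_lt hm⟩ (hfy.trans hfx.symm)

lemma existsUnique_mem_Ioo_eq_of_concaveOn_Ico (hf : ConcaveOn ℝ (Ico m b) f)
    (hcont : ContinuousOn f (Ico m b)) (hmb : m < b) (hm : r < f m)
    (hb : Tendsto f (𝓝[<] b) atBot) : ∃! x, x ∈ Ioo m b ∧ f x = r := by
  have hm_mem : m ∈ Ico m b := left_mem_Ico.2 hmb
  have hle : 𝓝[<] b ≤ 𝓟 (Ico m b) := le_principal_iff.2 (Ico_mem_nhdsLT hmb)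
  obtain ⟨x, hx, hfx⟩ := isPreconnected_Ico.intermediate_value_Iic hm_mem hle hcont hb hm.le
  have hmx : m < x := hx.1.lt_of_ne (by rintro rfl; exact hm.ne' hfx)
  refine ⟨x, ⟨⟨hmx, hx.2⟩, hfx⟩, fun y ⟨hy, hfy⟩ ↦ ?_⟩
  exact (strictAntiOn_of_concaveOn_of_lt hf hm_mem).injOn
    ⟨Ioo_subset_Ico_self hy, hy.1.le, hfy.trans_lt hm⟩
    ⟨hx, hx.1, hfx.trans_lt hm⟩ (hfy.trans hfx.symm)

end Roots

lemma ncard_setOf_mem_Ico_eq_two {α : Type*} [LinearOrder α] {p : α → Prop} {a m b : α}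
    (ha : ¬p a) (hm : ¬p m) (hleft : ∃! x, x ∈ Ioo a m ∧ p x)
    (hright : ∃! x, x ∈ Ioo m b ∧ p x) : {x | x ∈ Ico a b ∧ p x}.ncard = 2 := by
  obtain ⟨x, ⟨⟨hax, hxm⟩, hpx⟩, hx_unique⟩ := hleft
  obtain ⟨y, ⟨⟨hmy, hyb⟩, hpy⟩, hy_unique⟩ := hright
  have hxy : x < y := hxm.trans hmy
  rw [← ncard_pair hxy.ne]
  congr 1
  ext z
  constructor
  · rintro ⟨⟨haz, hzb⟩, hpz⟩
    have haz : a < z := haz.lt_of_ne (by rintro rfl; exact ha hpz)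
    rcases lt_trichotomy z m with hzm | rfl | hmz
    · exact .inl (hx_unique z ⟨⟨haz, hzm⟩, hpz⟩)
    · exact absurd hpz hm
    · exact .inr (hy_unique z ⟨⟨hmz, hzb⟩, hpz⟩)
  · rintro (rfl | rfl)
    · exact ⟨⟨hax.le, hxy.trans hyb⟩, hpx⟩
    · exact ⟨⟨(hax.trans hxy).le, hyb⟩, hpy⟩

lemma convexOn_inv_const_sub (c : ℝ) : ConvexOn ℝ (Iio c) fun z ↦ (c - z)⁻¹ := by
  let reflect : ℝ →ᵃ[ℝ] ℝ := AffineMap.const ℝ ℝ c - AffineMap.id ℝ ℝ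
  have hpre : reflect ⁻¹' Ioi 0 = Iio c := by
    ext z
    simp [reflect]
  rw [← hpre]
  exact ((convexOn_zpow (-1)).comp_affineMap reflect).congr fun z _ ↦ by simp [reflect]

lemma tendsto_inv_const_sub_nhdsLT (c : ℝ) :
    Tendsto (fun z ↦ (c - z)⁻¹) (𝓝[<] c) atTop := by
  have hlim : Tendsto (fun z ↦ c - z) (𝓝[<] c) (𝓝 0) :=
    ((continuous_sub_left c).tendsto' c 0 (sub_self c)).mono_left nhdsWithin_le_nhds
  exact tendsto_inv_nhdsGT_zero.comp (tendsto_nhdsWithin_iff.2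
    ⟨hlim, eventually_mem_nhdsWithin.mono fun _ hz ↦ mem_Ioi.2 (sub_pos.2 hz)⟩)

/-- The function `F` with its coefficients made independent: the theorem concerns
`c = 1 - q² / b`, `A = (1 - q)²` and `B = (b - 1) q² / b²`. -/
noncomputable def twoPole (c A B z : ℝ) : ℝ :=
  z - A * (1 - z) / (c - z) - B / (1 - z)

section TwoPole

variable {c A B m z : ℝ}

lemma twoPole_eq_sub_smul_inv (hz : z < c) :
    twoPole c A B z = z - A - A * (1 - c) * (c - z)⁻¹ - B * (1 - z)⁻¹ := by
  have : c - z ≠ 0 := (sub_pos.2 hz).ne'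
  unfold twoPole
  field_simp
  ring

lemma concaveOn_twoPole (hc : c ≤ 1) (hA : 0 ≤ A) (hB : 0 ≤ B) :
    ConcaveOn ℝ (Iio c) (twoPole c A B) := by
  have hconv : ConvexOn ℝ (Iio c) fun z : ℝ ↦ A * (1 - c) * (c - z)⁻¹ :=
    (convexOn_inv_const_sub c).smul (mul_nonneg hA (sub_nonneg.2 hc))
  have hconv' : ConvexOn ℝ (Iio c) fun z : ℝ ↦ B * (1 - z)⁻¹ :=
    ((convexOn_inv_const_sub 1).subset (Iio_subset_Iio hc) (convex_Iio c)).smul hB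
  have haff : ConcaveOn ℝ (Iio c) fun z : ℝ ↦ z - A :=
    (concaveOn_id (convex_Iio c)).sub (convexOn_const A (convex_Iio c))
  exact ((haff.sub hconv).sub hconv').congr fun z hz ↦ (twoPole_eq_sub_smul_inv hz).symm

lemma tendsto_twoPole_nhdsLT (hc : c < 1) (hA : 0 < A) :
    Tendsto (twoPole c A B) (𝓝[<] c) atBot := by
  have hpole : Tendsto (fun z ↦ -(A * (1 - c) * (c - z)⁻¹)) (𝓝[<] c) atBot :=
    tendsto_neg_atTop_atBot.comp
      ((tendsto_inv_const_sub_nhdsLT c).const_mul_atTop (mul_pos hA (sub_pos.2 hc)))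
  have hreg : ContinuousAt (fun z : ℝ ↦ z - A - B * (1 - z)⁻¹) c := by
    have : 1 - c ≠ 0 := (sub_pos.2 hc).ne'
    fun_prop (disch := assumption)
  refine ((hreg.tendsto.mono_left nhdsWithin_le_nhds).add_atBot hpole).congr' ?_
  filter_upwards [self_mem_nhdsWithin] with z hz
  rw [twoPole_eq_sub_smul_inv hz]
  ring

lemma twoPole_zero_neg (hc : 0 < c) (hA : 0 < A) (hB : 0 ≤ B) : twoPole c A B 0 < 0 := by
  have : 0 < A / c := div_pos hA hc
  simp only [twoPole, sub_zero, mul_one, div_one]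
  linarith

theorem twoPole_two_roots (hc : c < 1) (hA : 0 < A) (hB : 0 ≤ B) (hm0 : 0 < m) (hmc : m < c)
    (hm : 0 < twoPole c A B m) :
    (∃! z, z ∈ Ioo 0 m ∧ twoPole c A B z = 0) ∧
    (∃! z, z ∈ Ioo m c ∧ twoPole c A B z = 0) ∧
    {z | z ∈ Ico 0 c ∧ twoPole c A B z = 0}.ncard = 2 := by
  have hconc : ConcaveOn ℝ (Iio c) (twoPole c A B) := concaveOn_twoPole hc.le hA.le hB
  have hcont : ContinuousOn (twoPole c A B) (Iio c) := hconc.continuousOn isOpen_Iio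
  have hzero : twoPole c A B 0 < 0 := twoPole_zero_neg (hm0.trans hmc) hA hB
  have hIcc : Icc 0 m ⊆ Iio c := fun z hz ↦ hz.2.trans_lt hmc
  have hIco : Ico m c ⊆ Iio c := Ico_subset_Iio_self
  have hleft : ∃! z, z ∈ Ioo 0 m ∧ twoPole c A B z = 0 :=
    existsUnique_mem_Ioo_eq_of_concaveOn_Icc (hconc.subset hIcc (convex_Icc 0 m))
      (hcont.mono hIcc) hm0.le hzero hm
  have hright : ∃! z, z ∈ Ioo m c ∧ twoPole c A B z = 0 :=
    existsUnique_mem_Ioo_eq_of_concaveOn_Ico (hconc.subset hIco (convex_Ico m c))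
      (hcont.mono hIco) hmc hm (tendsto_twoPole_nhdsLT hc hA)
  exact ⟨hleft, hright, ncard_setOf_mem_Ico_eq_two hzero.ne hm.ne' hleft hright⟩

end TwoPole

section Parameters

variable {b q : ℝ}

-- The worst case is `b = 2`, where the value is `(1 - q) ((1 + q)² - 2) / (2 (1 + q))`.
lemma twoPole_half_pos (hb : 2 ≤ b) (hq : √2 - 1 < q) (hq1 : q < 1) :
    0 < twoPole (1 - q ^ 2 / b) ((1 - q) ^ 2) ((b - 1) * q ^ 2 / b ^ 2) (1 / 2) := by
  have hq0 : 0 < 1 + q := by linarith [Real.sqrt_nonneg 2]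
  have hsq : 2 < (1 + q) ^ 2 := (Real.sqrt_lt' hq0).1 (by linarith)
  have : 0 < 1 - q := sub_pos.2 hq1
  have hden : 0 < 1 - q ^ 2 / 2 - 1 / 2 := by nlinarith
  calc
    0 < (1 - q) * ((1 + q) ^ 2 - 2) / (2 * (1 + q)) := by
      have := sub_pos.2 hsq
      positivity
    _ = twoPole (1 - q ^ 2 / 2) ((1 - q) ^ 2) (q ^ 2 / 4) (1 / 2) := by
      have : 1 - q ^ 2 / 2 - 1 / 2 = (1 - q) * (1 + q) / 2 := by ring
      rw [twoPole, this]
      field_simp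
      ring
    _ ≤ twoPole (1 - q ^ 2 / b) ((1 - q) ^ 2) ((b - 1) * q ^ 2 / b ^ 2) (1 / 2) := by
      have hB : (b - 1) * q ^ 2 / b ^ 2 ≤ q ^ 2 / 4 :=
        div_le_of_le_mul₀ (sq_nonneg b) (by positivity) (by linarith [sq_nonneg (q * (b - 2))])
      unfold twoPole
      gcongr

lemma sqrt_two_sub_one_lt_div_add_one (hb : 2 ≤ b) : √2 - 1 < b / (b + 1) := by
  have hsqrt : √2 < 5 / 3 := (Real.sqrt_lt' (by norm_num)).2 (by norm_num)
  have hdiv : 2 / 3 ≤ b / (b + 1) := by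
    rw [div_le_div_iff₀ (by norm_num) (by linarith)]
    linarith
  linarith

end Parameters

theorem F_two_roots_general (b q : ℝ) (hb : 2 ≤ b) (hq1 : √2 - 1 < q) (hq2 : q < 1) :
    (1/2 : ℝ) < 1 - q^2/b ∧
    (∃! z : ℝ, z ∈ Set.Ioo (0:ℝ) (1/2) ∧
      z - (1 - q)^2 * (1 - z) / (1 - q^2/b - z) - (b - 1) * q^2 / (b^2 * (1 - z)) = 0) ∧
    (∃! z : ℝ, z ∈ Set.Ioo (1/2 : ℝ) (1 - q^2/b) ∧
      z - (1 - q)^2 * (1 - z) / (1 - q^2/b - z) - (b - 1) * q^2 / (b^2 * (1 - z)) = 0) ∧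
    ({z : ℝ | z ∈ Set.Ico (0:ℝ) (1 - q^2/b) ∧
      z - (1 - q)^2 * (1 - z) / (1 - q^2/b - z) - (b - 1) * q^2 / (b^2 * (1 - z)) = 0}.ncard
        = 2) := by
  have hq0 : 0 < q := (sub_pos.2 Real.one_lt_sqrt_two).trans hq1
  have hA : 0 < (1 - q) ^ 2 := pow_pos (sub_pos.2 hq2) 2
  have hB : 0 ≤ (b - 1) * q ^ 2 / b ^ 2 := by
    have : 0 ≤ b - 1 := by linarith
    positivity
  have hc1 : 1 - q ^ 2 / b < 1 := sub_lt_self 1 (by positivity)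
  have hc : 1 / 2 < 1 - q ^ 2 / b := by
    have : q ^ 2 / b ≤ q ^ 2 / 2 := by gcongr
    nlinarith
  simp only [← div_div]
  exact ⟨hc, twoPole_two_roots hc1 hA hB one_half_pos hc (twoPole_half_pos hb hq1 hq2)⟩

/-- For real `b ≥ 2` and `b/(b+1) ≤ q < 1`: `1/2 < 1 - q²/b`, and
`F(z) = z - (1-q)²(1-z)/(1 - q²/b - z) - (b-1)q²/(b²(1-z))` has exactly two
zeros in `[0, 1 - q²/b)`: exactly one in `(0, 1/2)` and exactly one in
`(1/2, 1 - q²/b)`. -/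
theorem F_two_roots (b q : ℝ) (hb : 2 ≤ b) (hq1 : b / (b + 1) ≤ q) (hq2 : q < 1) :
    (1/2 : ℝ) < 1 - q^2/b ∧
    (∃! z : ℝ, z ∈ Set.Ioo (0:ℝ) (1/2) ∧
      z - (1 - q)^2 * (1 - z) / (1 - q^2/b - z) - (b - 1) * q^2 / (b^2 * (1 - z)) = 0) ∧
    (∃! z : ℝ, z ∈ Set.Ioo (1/2 : ℝ) (1 - q^2/b) ∧
      z - (1 - q)^2 * (1 - z) / (1 - q^2/b - z) - (b - 1) * q^2 / (b^2 * (1 - z)) = 0) ∧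
    ({z : ℝ | z ∈ Set.Ico (0:ℝ) (1 - q^2/b) ∧
      z - (1 - q)^2 * (1 - z) / (1 - q^2/b - z) - (b - 1) * q^2 / (b^2 * (1 - z)) = 0}.ncard
        = 2) :=
  F_two_roots_general b q hb ((sqrt_two_sub_one_lt_div_add_one hb).trans_le hq1) hq2
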